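/- Let A = ℚ[t₁, t₂] ⊗ Λ(w₁,…,w₆) with deg w₁ = deg w₂ = deg w₃ = deg w₄ = 3, deg w₅ = 7 and deg w₆ = 9, and let D be the unique derivation of degree +1 on A with D t₁ = D t₂ = 0, D w₁ = D w₂ = D w₃ = D w₄ = 0, D w₅ = w₁w₃t₂ + t₂⁴ and D w₆ = w₂w₃t₁t₂ + t₁⁵. Then D ∘ D = 0 and dim_ℚ H(A, D) < ∞. -/

import Mathlib

/-!
Since `D` is a derivation of odd degree, `D ∘ D` is again a derivation, and it vanishes on all
generators; this gives `D ∘ D = 0` (`sq_eq_zero`).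

`D` kills the `tᵢ`, hence is linear over `P = ℚ[t₁, t₂]` (`map_poly_smul`). As the algebra is a
finitely generated `P`-module, the cocycles form a finitely generated `P`-module. The element
`D w₅ = w₁w₃t₂ + t₂⁴` has the closed conjugate `t₂⁴ - w₁w₃t₂`, and their product is `t₂⁸` because
`(w₁w₃)² = 0`; thus `t₂⁸ z = D (w₅ (t₂⁴ - w₁w₃t₂) z)` for each cocycle `z`. In the same way `w₆` shows
that `t₁¹⁰ z` is a coboundary (`sq_smul_mem_range`). So the cohomology is a finitely generated module
over `P` on which powers of `t₁` and `t₂` vanish, and therefore is finite-dimensional over `ℚ`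
(`cohomology_finite`).
-/

/- D w₅ = w₁w₃t₂ + t₂⁴, D w₆ = w₂w₃t₁t₂ + t₁⁵ on ℚ[t₁,t₂] ⊗ Λ(w₁,…,w₆), deg w = (3,3,3,3,7,9). -/

open scoped TensorProduct

set_option synthInstance.maxHeartbeats 1000000
set_option maxHeartbeats 1000000

noncomputable section

/-- The free graded-commutative ℚ-algebra `ℚ[t₁,…,t_r] ⊗ Λ(v₁,…,v_n)`:
the tensor product of a polynomial algebra on `r` generators of degree 2 with
an exterior algebra on `n` generators of odd degrees. -/
abbrev FGCA (r n : ℕ) : Type :=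
  MvPolynomial (Fin r) ℚ ⊗[ℚ] ExteriorAlgebra ℚ (Fin n → ℚ)

/-- The degree-2 polynomial generators `tᵢ`. -/
def tg (r n : ℕ) (i : Fin r) : FGCA r n := (MvPolynomial.X i) ⊗ₜ 1

/-- The odd-degree exterior generators `vⱼ`. -/
def vg (r n : ℕ) (j : Fin n) : FGCA r n :=
  1 ⊗ₜ (ExteriorAlgebra.ι ℚ (Pi.single j (1 : ℚ)))

/-- The monomial `t^α · v_S` (with the exterior factors multiplied in increasing
order of index).  These monomials form a ℚ-basis of `FGCA r n`. -/
def gmon (r n : ℕ) (α : Fin r →₀ ℕ) (S : Finset (Fin n)) : FGCA r n :=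
  (MvPolynomial.monomial α (1 : ℚ)) ⊗ₜ
    ((S.sort (· ≤ ·)).map fun j => ExteriorAlgebra.ι ℚ (Pi.single j (1 : ℚ))).prod

/-- The (cohomological) degree of the monomial `t^α · v_S`, where each `tᵢ` has
degree `2` and each `vⱼ` has degree `dv j`. -/
def gdeg (r n : ℕ) (dv : Fin n → ℕ) (α : Fin r →₀ ℕ) (S : Finset (Fin n)) : ℕ :=
  (α.sum fun _ k => 2 * k) + S.sum dv

/-- The homogeneous part of degree `k` of `FGCA r n`: the span of the monomials
of degree `k`. -/
def homog (r n : ℕ) (dv : Fin n → ℕ) (k : ℕ) : Submodule ℚ (FGCA r n) :=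
  Submodule.span ℚ { a | ∃ α S, gdeg r n dv α S = k ∧ a = gmon r n α S }

/-- The graded Leibniz rule for a degree `+1` derivation `D`:
`D(ab) = D(a)·b + (−1)^(deg a) a·D(b)` for homogeneous `a`. -/
def IsLeibniz (r n : ℕ) (dv : Fin n → ℕ) (D : FGCA r n →ₗ[ℚ] FGCA r n) : Prop :=
  ∀ (p : ℕ) (a b : FGCA r n), a ∈ homog r n dv p →
    D (a * b) = D a * b + ((-1 : ℚ) ^ p) • (a * D b)

/-- `D` raises (cohomological) degree by `1`. -/
def RaisesDegByOne (r n : ℕ) (dv : Fin n → ℕ) (D : FGCA r n →ₗ[ℚ] FGCA r n) : Prop :=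
  ∀ (k : ℕ), ∀ a ∈ homog r n dv k, D a ∈ homog r n dv (k + 1)

/-- The cohomology `H(A, D) = ker D / im D` as a ℚ-vector space, realized as the
image of `ker D` in `A ⧸ im D`. -/
abbrev Cohomology (r n : ℕ) (D : FGCA r n →ₗ[ℚ] FGCA r n) : Type :=
  (LinearMap.ker D).map (LinearMap.range D).mkQ

end

/-! ### Homogeneous generators and linearity over the polynomial part -/

lemma one_mem_homog (r n : ℕ) (d : Fin n → ℕ) : (1 : FGCA r n) ∈ homog r n d 0 := by
  refine Submodule.subset_span ⟨0, ∅, by simp [gdeg], ?_⟩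
  simp [gmon, Algebra.TensorProduct.one_def]

lemma tg_mem_homog (r n : ℕ) (d : Fin n → ℕ) (i : Fin r) : tg r n i ∈ homog r n d 2 := by
  refine Submodule.subset_span ⟨Finsupp.single i 1, ∅, by simp [gdeg], ?_⟩
  simp [gmon, tg, MvPolynomial.X]

lemma vg_mem_homog (r n : ℕ) (d : Fin n → ℕ) (j : Fin n) : vg r n j ∈ homog r n d (d j) := by
  refine Submodule.subset_span ⟨0, {j}, by simp [gdeg], ?_⟩
  simp [gmon, vg]

lemma tg_mul (r n : ℕ) (i : Fin r) (a : FGCA r n) :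
    tg r n i * a = (MvPolynomial.X i : MvPolynomial (Fin r) ℚ) • a := by
  induction a using TensorProduct.induction_on with
  | zero => simp
  | add x y hx hy => rw [mul_add, smul_add, hx, hy]
  | tmul p e =>
    rw [tg, Algebra.TensorProduct.tmul_mul_tmul, one_mul, TensorProduct.smul_tmul', smul_eq_mul]

/-- A graded derivation that kills the polynomial generators is linear over the polynomial ring. -/
lemma map_poly_smul {r n : ℕ} {d : Fin n → ℕ} {D : FGCA r n →ₗ[ℚ] FGCA r n}
    (hL : IsLeibniz r n d D) (h0 : ∀ i, D (tg r n i) = 0)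
    (p : MvPolynomial (Fin r) ℚ) (a : FGCA r n) : D (p • a) = p • D a := by
  induction p using MvPolynomial.induction_on generalizing a with
  | C c =>
    rw [← MvPolynomial.algebraMap_eq, algebraMap_smul, algebraMap_smul, map_smul]
  | add p q hp hq => rw [add_smul, add_smul, map_add, hp, hq]
  | mul_X p i hp =>
    rw [mul_smul, hp, mul_smul, ← tg_mul, hL 2 _ _ (tg_mem_homog r n d i), h0, zero_mul,
      zero_add, tg_mul]
    simp

lemma map_one_eq_zero {r n : ℕ} {d : Fin n → ℕ} {D : FGCA r n →ₗ[ℚ] FGCA r n}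
    (hL : IsLeibniz r n d D) : D 1 = 0 := by
  have h := hL 0 1 1 (one_mem_homog r n d)
  simpa using h

/-- The square of an odd graded derivation is again a derivation, so it vanishes as soon as it
vanishes on the generators. -/
lemma sq_eq_zero {r n : ℕ} {d : Fin n → ℕ} {D : FGCA r n →ₗ[ℚ] FGCA r n}
    (hL : IsLeibniz r n d D) (hR : RaisesDegByOne r n d D) (h0 : ∀ i, D (tg r n i) = 0)
    (hv : ∀ j, D (D (vg r n j)) = 0) (x : FGCA r n) : D (D x) = 0 := by
  have key : ∀ j y, D (D y) = 0 → D (D (vg r n j * y)) = 0 := by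
    intro j y hy
    have hj := vg_mem_homog r n d j
    rw [hL _ _ _ hj, map_add, map_smul, hL _ _ _ (hR _ _ hj), hL _ _ _ hj, hv, hy]
    simp only [zero_mul, mul_zero, zero_add, smul_zero, add_zero, pow_succ, mul_neg, mul_one]
    rw [← add_smul, neg_add_cancel, zero_smul]
  have ext : ∀ e : ExteriorAlgebra ℚ (Fin n → ℚ), D (D (1 ⊗ₜ e)) = 0 := by
    intro e
    induction e using CliffordAlgebra.left_induction with
    | algebraMap c =>
      rw [Algebra.algebraMap_eq_smul_one, TensorProduct.tmul_smul, map_smul, map_smul,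
        ← Algebra.TensorProduct.one_def, map_one_eq_zero hL, map_zero, smul_zero]
    | add x y hx hy => rw [TensorProduct.tmul_add, map_add, map_add, hx, hy, add_zero]
    | ι_mul x m hx =>
      have hm : m = ∑ j, m j • Pi.single j (1 : ℚ) := by
        ext k; simp [Finset.sum_apply, Pi.single_apply]
      have : (1 : MvPolynomial (Fin r) ℚ) ⊗ₜ[ℚ] (CliffordAlgebra.ι 0 m * x :
          ExteriorAlgebra ℚ (Fin n → ℚ)) = ∑ j, m j • (vg r n j * (1 ⊗ₜ x)) := by
        conv_lhs => rw [hm]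
        rw [map_sum, Finset.sum_mul, TensorProduct.tmul_sum]
        refine Finset.sum_congr rfl fun j _ => ?_
        rw [map_smul, smul_mul_assoc, TensorProduct.tmul_smul, vg,
          Algebra.TensorProduct.tmul_mul_tmul, one_mul]
      rw [this, map_sum, map_sum]
      refine Finset.sum_eq_zero fun j _ => ?_
      rw [map_smul, map_smul, key j _ hx, smul_zero]
  induction x using TensorProduct.induction_on with
  | zero => simp
  | add x y hx hy => rw [map_add, map_add, hx, hy, add_zero]
  | tmul p e =>
    have : p ⊗ₜ[ℚ] e = p • ((1 : MvPolynomial (Fin r) ℚ) ⊗ₜ[ℚ] e) := by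
      rw [TensorProduct.smul_tmul', smul_eq_mul, mul_one]
    rw [this, map_poly_smul hL h0, map_poly_smul hL h0, ext, smul_zero]

/-! ### The finiteness criterion -/

/-- If a power of each polynomial generator acts by zero on cohomology, then the cohomology is
finite-dimensional: by Noetherianity the cocycles are finitely generated over the polynomial ring,
and modulo coboundaries only finitely many monomials act nontrivially on the generators. -/
lemma cohomology_finite {r n : ℕ} {D : FGCA r n →ₗ[ℚ] FGCA r n}
    (hP : ∀ (p : MvPolynomial (Fin r) ℚ) a, D (p • a) = p • D a) (N : ℕ)
    (hN : ∀ i z, D z = 0 → (MvPolynomial.X i : MvPolynomial (Fin r) ℚ) ^ N • z ∈ LinearMap.range D) :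
    FiniteDimensional ℚ (Cohomology r n D) := by
  classical
  have : Module.Finite ℚ (ExteriorAlgebra ℚ (Fin n → ℚ)) :=
    Module.Finite.of_basis (Pi.basisFun ℚ (Fin n)).ExteriorAlgebra
  let D' : FGCA r n →ₗ[MvPolynomial (Fin r) ℚ] FGCA r n :=
    { toFun := D, map_add' := map_add D, map_smul' := hP }
  obtain ⟨S, hS⟩ : (LinearMap.ker D').FG := IsNoetherian.noetherian _
  have hSker : ∀ z ∈ S, D z = 0 := fun z hz =>
    (hS ▸ Submodule.subset_span hz : z ∈ LinearMap.ker D')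
  let B : Finset (Fin r →₀ ℕ) := Finset.Iic (Finsupp.equivFunOnFinite.symm fun _ => N)
  let F : Finset (FGCA r n) :=
    (B ×ˢ S).image fun q : (Fin r →₀ ℕ) × FGCA r n => MvPolynomial.monomial q.1 (1 : ℚ) • q.2
  have mon : ∀ α : Fin r →₀ ℕ, ∀ z ∈ S, MvPolynomial.monomial α (1 : ℚ) • z ∈
      Submodule.span ℚ (F : Set (FGCA r n)) ⊔ LinearMap.range D := by
    intro α z hz
    by_cases hα : α ∈ B
    · refine Submodule.mem_sup_left (Submodule.subset_span ?_)
      exact Finset.mem_image.2 ⟨(α, z), Finset.mem_product.2 ⟨hα, hz⟩, rfl⟩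
    · refine Submodule.mem_sup_right ?_
      obtain ⟨i, hi⟩ : ∃ i, N < α i := by
        by_contra! h
        exact hα (Finset.mem_Iic.2 fun i => by simpa using h i)
      have hle : Finsupp.single i N ≤ α := by
        rw [Finsupp.single_le_iff]; exact hi.le
      have hsplit : MvPolynomial.monomial α (1 : ℚ) =
          MvPolynomial.monomial (α - Finsupp.single i N) 1 * MvPolynomial.X i ^ N := by
        rw [MvPolynomial.X_pow_eq_monomial, MvPolynomial.monomial_mul, one_mul,
          tsub_add_cancel_of_le hle]
      obtain ⟨y, hy⟩ := hN i z (hSker z hz)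
      exact ⟨MvPolynomial.monomial (α - Finsupp.single i N) (1 : ℚ) • y, by
        rw [hP, hy, hsplit, mul_smul]⟩
  have hker : LinearMap.ker D ≤ Submodule.span ℚ (F : Set (FGCA r n)) ⊔ LinearMap.range D := by
    intro z hz
    have hz' : z ∈ Submodule.span (MvPolynomial (Fin r) ℚ) (S : Set (FGCA r n)) := by
      rw [hS]; exact hz
    clear hz
    induction hz' using Submodule.closure_induction with
    | zero => exact zero_mem _
    | add x y _ _ hx hy => exact add_mem hx hy
    | smul_mem p x hx =>
      induction p using MvPolynomial.induction_on' with
      | monomial α c =>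
        have hc : MvPolynomial.monomial α c = c • MvPolynomial.monomial α (1 : ℚ) := by
          rw [MvPolynomial.smul_monomial, smul_eq_mul, mul_one]
        rw [hc, smul_assoc]
        exact Submodule.smul_mem _ _ (mon α x hx)
      | add p q hp hq => rw [add_smul]; exact add_mem hp hq
  have hmap : (LinearMap.ker D).map (LinearMap.range D).mkQ ≤
      (Submodule.span ℚ (F : Set (FGCA r n))).map (LinearMap.range D).mkQ := by
    refine (Submodule.map_mono hker).trans ?_
    rw [Submodule.map_sup, Submodule.mkQ_map_self, sup_bot_eq]
  have : FiniteDimensional ℚ (Submodule.span ℚ (F : Set (FGCA r n))) :=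
    FiniteDimensional.span_finset ℚ F
  exact Submodule.finiteDimensional_of_le hmap

/-! ### The null-homotopy -/

lemma vg_pair_sq (r n : ℕ) (i j : Fin n) :
    vg r n i * vg r n j * (vg r n i * vg r n j) = 0 := by
  have h : ∀ u v : Fin n → ℚ, ExteriorAlgebra.ι ℚ u * ExteriorAlgebra.ι ℚ v *
      (ExteriorAlgebra.ι ℚ u * ExteriorAlgebra.ι ℚ v) = 0 := by
    intro u v
    rw [eq_neg_of_add_eq_zero_left (ExteriorAlgebra.ι_add_mul_swap u v), neg_mul_neg, mul_assoc,
      ← mul_assoc (ExteriorAlgebra.ι ℚ u),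
      eq_neg_of_add_eq_zero_left (ExteriorAlgebra.ι_add_mul_swap u v), neg_mul, mul_neg,
      ← mul_assoc, ← mul_assoc, ExteriorAlgebra.ι_sq_zero, zero_mul, zero_mul, neg_zero]
  simp only [vg, Algebra.TensorProduct.tmul_mul_tmul, h, TensorProduct.tmul_zero]

/-- If `D v_j = p v_a v_b + q` with `p`, `q` polynomials and `v_a`, `v_b` closed, then `q²` kills
cohomology: since `p v_a v_b` squares to zero, `q² z = (p v_a v_b + q)(q - p v_a v_b) z`, which for
closed `z` equals `D (v_j (q - p v_a v_b) z)`. -/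
lemma sq_smul_mem_range {r n : ℕ} {d : Fin n → ℕ} {D : FGCA r n →ₗ[ℚ] FGCA r n}
    (hL : IsLeibniz r n d D)
    (hP : ∀ (p : MvPolynomial (Fin r) ℚ) a, D (p • a) = p • D a)
    (j a b : Fin n) (p q : MvPolynomial (Fin r) ℚ)
    (ha : D (vg r n a) = 0) (hb : D (vg r n b) = 0)
    (hj : D (vg r n j) = p • (vg r n a * vg r n b) + q • 1)
    (z : FGCA r n) (hz : D z = 0) : q ^ 2 • z ∈ LinearMap.range D := by
  set g := vg r n a * vg r n b with hg
  have hgg : g * g = 0 := vg_pair_sq r n a b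
  have hgz : D (g * z) = 0 := by
    rw [hg, mul_assoc, hL _ _ _ (vg_mem_homog r n d a), hL _ _ _ (vg_mem_homog r n d b), ha, hb, hz]
    simp
  refine ⟨vg r n j * (q • z - p • (g * z)), ?_⟩
  rw [hL _ _ _ (vg_mem_homog r n d j), hj, map_sub, hP, hP, hz, hgz]
  simp only [smul_zero, sub_zero, mul_zero, add_zero, add_mul, mul_sub, smul_mul_assoc,
    mul_smul_comm, one_mul]
  rw [← mul_assoc g g z, hgg, zero_mul, smul_zero, zero_add, smul_add, smul_comm p q, pow_two, mul_smul]
  exact add_sub_cancel_left (G := FGCA r n) _ _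

noncomputable section

local notation "dv" => (![3, 3, 3, 3, 7, 9] : Fin 6 → ℕ)
local notation "t₁" => tg 2 6 0
local notation "t₂" => tg 2 6 1
local notation "w₁" => vg 2 6 0
local notation "w₂" => vg 2 6 1
local notation "w₃" => vg 2 6 2
local notation "w₄" => vg 2 6 3
local notation "w₅" => vg 2 6 4
local notation "w₆" => vg 2 6 5

theorem stmt_15 (D : FGCA 2 6 →ₗ[ℚ] FGCA 2 6)
    (hLeib : IsLeibniz 2 6 dv D)
    (hdeg : RaisesDegByOne 2 6 dv D)
    (hD0 : D t₁ = (0 : FGCA 2 6))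
    (hD1 : D t₂ = (0 : FGCA 2 6))
    (hD2 : D w₁ = (0 : FGCA 2 6))
    (hD3 : D w₂ = (0 : FGCA 2 6))
    (hD4 : D w₃ = (0 : FGCA 2 6))
    (hD5 : D w₄ = (0 : FGCA 2 6))
    (hD6 : D w₅ = w₁ * w₃ * t₂ + t₂ ^ 4)
    (hD7 : D w₆ = w₂ * w₃ * t₁ * t₂ + t₁ ^ 5)
    : D ∘ₗ D = 0 ∧ FiniteDimensional ℚ (Cohomology 2 6 D) := by
  have ht : ∀ i, D (tg 2 6 i) = 0 := by
    intro i; fin_cases i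
    exacts [hD0, hD1]
  have hP := map_poly_smul hLeib ht
  have h5 : D w₅ = (MvPolynomial.X 1 : MvPolynomial (Fin 2) ℚ) • (w₁ * w₃) +
      (MvPolynomial.X 1 ^ 4 : MvPolynomial (Fin 2) ℚ) • 1 := by
    rw [hD6]
    simp [tg, vg, TensorProduct.smul_tmul', Algebra.TensorProduct.one_def]
  have h6 : D w₆ = (MvPolynomial.X 0 * MvPolynomial.X 1 : MvPolynomial (Fin 2) ℚ) • (w₂ * w₃) +
      (MvPolynomial.X 0 ^ 5 : MvPolynomial (Fin 2) ℚ) • 1 := by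
    rw [hD7]
    simp [tg, vg, TensorProduct.smul_tmul', Algebra.TensorProduct.one_def]
  have hw : ∀ a b : Fin 6, D (vg 2 6 a) = 0 → D (vg 2 6 b) = 0 →
      D (vg 2 6 a * vg 2 6 b) = 0 := by
    intro a b ha hb
    rw [hLeib _ _ _ (vg_mem_homog 2 6 dv a), ha, hb]
    simp
  have h1 := map_one_eq_zero hLeib
  constructor
  · refine LinearMap.ext fun x => sq_eq_zero hLeib hdeg ht ?_ x
    intro j
    fin_cases j
    · exact (congrArg D hD2).trans (map_zero D)
    · exact (congrArg D hD3).trans (map_zero D)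
    · exact (congrArg D hD4).trans (map_zero D)
    · exact (congrArg D hD5).trans (map_zero D)
    · refine (congrArg D h5).trans ?_
      rw [map_add, hP, hP, hw _ _ hD2 hD4, h1, smul_zero, smul_zero, add_zero]
    · refine (congrArg D h6).trans ?_
      rw [map_add, hP, hP, hw _ _ hD3 hD4, h1, smul_zero, smul_zero, add_zero]
  · refine cohomology_finite hP 10 fun i z hz => ?_
    fin_cases i
    · have h := sq_smul_mem_range hLeib hP 5 1 2 _ _ hD3 hD4 h6 z hz
      rwa [← pow_mul] at h
    · obtain ⟨y, hy⟩ := sq_smul_mem_range hLeib hP 4 0 2 _ _ hD2 hD4 h5 z hz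
      -- Here `t₂ ^ 8 z` is a coboundary; the factor `t₂ ^ 2` matches the exponent `10` of `t₁`.
      refine ⟨(MvPolynomial.X 1 ^ 2 : MvPolynomial (Fin 2) ℚ) • y, ?_⟩
      rw [hP, hy, ← mul_smul, ← pow_mul, ← pow_add]
      rfl

end
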